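/- Let L > 0, let Q = [0,L]³ ⊆ ℝ³ be the cube of side length L, and let d : ℝ³ → ℝ be twice continuously differentiable on an open set containing Q with ‖∇²d(z)‖ ≤ M for all z ∈ Q, where M ≥ 0. Define the gradient-augmented trilinear interpolant d_ga(x) = Σ_{v ∈ {0,1}³} λ_v(x)·(d(x_v) + ⟨∇d(x_v), x − x_v⟩). Then for every x ∈ Q, |d_ga(x) − d(x)| ≤ 3·M·L²/8. -/

import Mathlib

open RealInnerProductSpace

/-- The vertex of the cube `[0,L]³` indexed by `v ∈ {0,1}³`:
`(x_v) i = L` if `v i = 1` and `0` otherwise. -/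
noncomputable def cubeVertex (L : ℝ) (v : Fin 3 → Bool) :
    EuclideanSpace ℝ (Fin 3) :=
  (EuclideanSpace.equiv (Fin 3) ℝ).symm fun i => if v i then L else 0

/-- The trilinear weight of the vertex `v ∈ {0,1}³` of the cube `[0,L]³`
at the point `x`: `λ_v(x) = ∏ i, (x i / L if v i = 1 else (L - x i) / L)`. -/
noncomputable def triWeight (L : ℝ) (v : Fin 3 → Bool)
    (x : EuclideanSpace ℝ (Fin 3)) : ℝ :=
  ∏ i, if v i then x i / L else (L - x i) / L

/-!
By Taylor's theorem, the value at `x` of the linearization of `d` at a vertex `x_v` differs from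
`d x` by at most `M / 2 * ‖x - x_v‖ ^ 2`. The weights `λ_v(x)` are the probabilities of the values
of a random vertex with independent coordinates and mean `x`, so averaging the Taylor bounds
produces the variance of that vertex. The variance is additive over the coordinates, and each
coordinate contributes `x_i * (L - x_i) ≤ L ^ 2 / 4`.
-/

open Set
open scoped NNReal

section Taylor

variable {E F : Type*} [NormedAddCommGroup E] [NormedSpace ℝ E]
  [NormedAddCommGroup F] [NormedSpace ℝ F]

lemma norm_image_sub_le_of_norm_deriv_le_mul_sub {g g' : ℝ → F} {a b C : ℝ} (hab : a ≤ b)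
    (hg : ∀ t ∈ Icc a b, HasDerivWithinAt g (g' t) (Icc a b) t)
    (bound : ∀ t ∈ Ico a b, ‖g' t‖ ≤ C * (t - a)) :
    ‖g b - g a‖ ≤ C / 2 * (b - a) ^ 2 := by
  have hderiv : ∀ t ∈ Ico a b, HasDerivWithinAt (fun t => g t - g a) (g' t) (Ici t) t :=
    fun t ht => ((hg t (Ico_subset_Icc_self ht)).mono_of_mem_nhdsWithin
      (Icc_mem_nhdsGE_of_mem ht)).sub_const _
  have hB : ∀ t, HasDerivAt (fun t => C / 2 * (t - a) ^ 2) (C * (t - a)) t := fun t =>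
    ((((hasDerivAt_id t).sub_const a).pow 2).const_mul (C / 2)).congr_deriv
      (by simp only [id]; ring)
  exact image_norm_le_of_norm_deriv_right_le_deriv_boundary
    (fun t ht => ((hg t ht).sub_const _).continuousWithinAt) hderiv (by simp) hB bound
    (right_mem_Icc.2 hab)

variable {f : E → F} {f' : E → E →L[ℝ] F} {s : Set E} {K : ℝ≥0} {x y : E}

lemma norm_add_fderiv_sub_le_of_lipschitzOnWith (hs : Convex ℝ s)
    (hf : ∀ z ∈ s, HasFDerivWithinAt f (f' z) s z) (hf' : LipschitzOnWith K f' s)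
    (hx : x ∈ s) (hy : y ∈ s) :
    ‖f y + f' y (x - y) - f x‖ ≤ K / 2 * ‖x - y‖ ^ 2 := by
  let γ : ℝ → E := AffineMap.lineMap y x
  have hγ : MapsTo γ (Icc 0 1) s := fun t ht => hs.lineMap_mem hy hx ht
  have hderiv : ∀ t ∈ Icc (0 : ℝ) 1,
      HasDerivWithinAt (fun t => f (γ t) - t • f' y (x - y))
        ((f' (γ t) - f' y) (x - y)) (Icc 0 1) t := fun t ht =>
    (((hf _ (hγ ht)).comp_hasDerivWithinAt t AffineMap.hasDerivWithinAt_lineMap hγ).sub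
      ((hasDerivWithinAt_id t _).smul_const (f' y (x - y)))).congr_deriv (by simp)
  have bound : ∀ t ∈ Ico (0 : ℝ) 1,
      ‖(f' (γ t) - f' y) (x - y)‖ ≤ K * ‖x - y‖ ^ 2 * (t - 0) := fun t ht => by
    have hdist : ‖γ t - y‖ = t * ‖x - y‖ := by
      simp [γ, AffineMap.lineMap_apply, norm_smul, abs_of_nonneg ht.1]
    calc ‖(f' (γ t) - f' y) (x - y)‖ ≤ K * ‖γ t - y‖ * ‖x - y‖ :=
          (f' (γ t) - f' y).le_of_opNorm_le
            (hf'.norm_sub_le (hγ (Ico_subset_Icc_self ht)) hy) (x - y)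
      _ = K * ‖x - y‖ ^ 2 * (t - 0) := by rw [hdist]; ring
  calc ‖f y + f' y (x - y) - f x‖
      = ‖f (γ 1) - (1 : ℝ) • f' y (x - y) - (f (γ 0) - (0 : ℝ) • f' y (x - y))‖ := by
        rw [← norm_neg]
        simp only [γ, AffineMap.lineMap_apply_one, AffineMap.lineMap_apply_zero, one_smul,
          zero_smul]
        congr 1
        abel
    _ ≤ K * ‖x - y‖ ^ 2 / 2 * (1 - 0) ^ 2 :=
        norm_image_sub_le_of_norm_deriv_le_mul_sub zero_le_one hderiv bound
    _ = K / 2 * ‖x - y‖ ^ 2 := by ring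

lemma norm_sum_smul_add_fderiv_sub_le_of_lipschitzOnWith (hs : Convex ℝ s)
    (hf : ∀ z ∈ s, HasFDerivWithinAt f (f' z) s z) (hf' : LipschitzOnWith K f' s)
    {κ : Type*} {t : Finset κ} {w : κ → ℝ} {p : κ → E} (hw : ∀ k ∈ t, 0 ≤ w k)
    (hw_sum : ∑ k ∈ t, w k = 1) (hp : ∀ k ∈ t, p k ∈ s) (hx : x ∈ s) :
    ‖(∑ k ∈ t, w k • (f (p k) + f' (p k) (x - p k))) - f x‖ ≤
      K / 2 * ∑ k ∈ t, w k * ‖x - p k‖ ^ 2 := by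
  calc ‖(∑ k ∈ t, w k • (f (p k) + f' (p k) (x - p k))) - f x‖
      = ‖∑ k ∈ t, w k • (f (p k) + f' (p k) (x - p k) - f x)‖ := by
        simp only [smul_sub, Finset.sum_sub_distrib, ← Finset.sum_smul, hw_sum, one_smul]
    _ ≤ ∑ k ∈ t, w k * (K / 2 * ‖x - p k‖ ^ 2) := by
        refine norm_sum_le_of_le t fun k hk => ?_
        rw [norm_smul, Real.norm_of_nonneg (hw k hk)]
        exact mul_le_mul_of_nonneg_left
          (norm_add_fderiv_sub_le_of_lipschitzOnWith hs hf hf' hx (hp k hk)) (hw k hk)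
    _ = K / 2 * ∑ k ∈ t, w k * ‖x - p k‖ ^ 2 := by
        rw [Finset.mul_sum]
        exact Finset.sum_congr rfl fun k _ => mul_left_comm _ _ _

lemma lipschitzOnWith_fderiv_of_norm_iteratedFDeriv_two_le (hs : Convex ℝ s)
    (hf : ∀ z ∈ s, DifferentiableAt ℝ (fderiv ℝ f) z)
    (bound : ∀ z ∈ s, ‖iteratedFDeriv ℝ 2 f z‖ ≤ K) :
    LipschitzOnWith K (fderiv ℝ f) s :=
  hs.lipschitzOnWith_of_nnnorm_fderiv_le hf fun z hz => by
    rw [← NNReal.coe_le_coe, coe_nnnorm, ← norm_iteratedFDeriv_one, norm_iteratedFDeriv_fderiv]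
    exact bound z hz

end Taylor

section ProductWeights

variable {ι κ R : Type*} [Fintype ι] [Fintype κ] [CommSemiring R] {g : ι → κ → R}

lemma sum_prod_eq_one [DecidableEq ι] (hg : ∀ i, ∑ k, g i k = 1) :
    ∑ v : ι → κ, ∏ i, g i (v i) = 1 := by
  rw [← Fintype.piFinset_univ, Finset.sum_prod_piFinset, Finset.prod_eq_one fun i _ => hg i]

lemma sum_prod_mul_apply [DecidableEq ι] (hg : ∀ i, ∑ k, g i k = 1) (j : ι) (h : κ → R) :
    ∑ v : ι → κ, (∏ i, g i (v i)) * h (v j) = ∑ k, g j k * h k := by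
  let G : ι → κ → R := fun i k => g i k * if i = j then h k else 1
  have hG : ∀ v : ι → κ, (∏ i, g i (v i)) * h (v j) = ∏ i, G i (v i) := fun v => by
    simp only [G, Finset.prod_mul_distrib, Finset.prod_ite_eq', Finset.mem_univ, if_true]
  have hG_sum : ∀ i ≠ j, ∑ k, G i k = 1 := fun i hij => by simp [G, hij, hg]
  simp only [hG]
  rw [← Fintype.piFinset_univ, Finset.sum_prod_piFinset,
    Fintype.prod_eq_single j fun i hij => hG_sum i hij]
  simp [G]

end ProductWeights

/-- The weights of the endpoints `a` (for `false`) and `b` (for `true`) in the linear interpolation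
at `t` of a function on `[a, b]`. -/
noncomputable def lerpWeight (a b t : ℝ) (c : Bool) : ℝ :=
  if c then (t - a) / (b - a) else (b - t) / (b - a)

section LerpWeight

variable {a b t : ℝ}

lemma lerpWeight_nonneg (ht : t ∈ Icc a b) (c : Bool) : 0 ≤ lerpWeight a b t c := by
  have hab : 0 ≤ b - a := sub_nonneg.2 (ht.1.trans ht.2)
  cases c
  · exact div_nonneg (sub_nonneg.2 ht.2) hab
  · exact div_nonneg (sub_nonneg.2 ht.1) hab

lemma sum_lerpWeight (hab : a ≠ b) : ∑ c, lerpWeight a b t c = 1 := by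
  have hba : b - a ≠ 0 := sub_ne_zero.2 hab.symm
  simp only [lerpWeight, Fintype.sum_bool, if_true, Bool.false_eq_true, if_false]
  field_simp
  ring

lemma sum_lerpWeight_mul_sub_sq (hab : a ≠ b) :
    ∑ c, lerpWeight a b t c * (t - if c then b else a) ^ 2 = (t - a) * (b - t) := by
  have hba : b - a ≠ 0 := sub_ne_zero.2 hab.symm
  simp only [lerpWeight, Fintype.sum_bool, if_true, Bool.false_eq_true, if_false]
  field_simp
  ring

end LerpWeight

section Box

variable {ι : Type*}

/-- The axis-parallel box with opposite corners `a` and `b`. -/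
def coordBox (a b : EuclideanSpace ℝ ι) : Set (EuclideanSpace ℝ ι) :=
  {y | ∀ i, y i ∈ Icc (a i) (b i)}

/-- The vertex of the box with opposite corners `a` and `b` indexed by `v : ι → Bool`, where `true`
selects the coordinate of `b`. -/
def boxVertex (a b : EuclideanSpace ℝ ι) (v : ι → Bool) : EuclideanSpace ℝ ι :=
  WithLp.toLp 2 fun i => if v i then b i else a i

/-- The weight of the vertex `boxVertex a b v` in the multilinear interpolation at `x` of a function
on the box with opposite corners `a` and `b`. -/
noncomputable def multilinearWeight [Fintype ι] (a b : EuclideanSpace ℝ ι) (v : ι → Bool)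
    (x : EuclideanSpace ℝ ι) : ℝ :=
  ∏ i, lerpWeight (a i) (b i) (x i) (v i)

variable {a b x : EuclideanSpace ℝ ι}

lemma convex_coordBox : Convex ℝ (coordBox a b) :=
  fun _ hy _ hz _ _ hr hs hrs i => convex_Icc (a i) (b i) (hy i) (hz i) hr hs hrs

lemma boxVertex_mem_coordBox (hab : ∀ i, a i ≤ b i) (v : ι → Bool) :
    boxVertex a b v ∈ coordBox a b := fun i => by
  cases hv : v i <;> simp [boxVertex, hv, hab i]

variable [Fintype ι]

lemma multilinearWeight_nonneg (hx : x ∈ coordBox a b) (v : ι → Bool) :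
    0 ≤ multilinearWeight a b v x :=
  Finset.prod_nonneg fun i _ => lerpWeight_nonneg (hx i) (v i)

lemma sum_multilinearWeight [DecidableEq ι] (hab : ∀ i, a i ≠ b i) :
    ∑ v, multilinearWeight a b v x = 1 :=
  sum_prod_eq_one fun i => sum_lerpWeight (hab i)

lemma sum_multilinearWeight_mul_norm_sub_sq [DecidableEq ι] (hab : ∀ i, a i ≠ b i) :
    ∑ v, multilinearWeight a b v x * ‖x - boxVertex a b v‖ ^ 2 =
      ∑ i, (x i - a i) * (b i - x i) := by
  simp only [EuclideanSpace.real_norm_sq_eq, Finset.mul_sum]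
  rw [Finset.sum_comm]
  refine Finset.sum_congr rfl fun i _ => ?_
  calc ∑ v, multilinearWeight a b v x * (x i - if v i then b i else a i) ^ 2
      = ∑ c, lerpWeight (a i) (b i) (x i) c * (x i - if c then b i else a i) ^ 2 :=
        sum_prod_mul_apply (fun j => sum_lerpWeight (hab j)) i
          fun c => (x i - if c then b i else a i) ^ 2
    _ = (x i - a i) * (b i - x i) := sum_lerpWeight_mul_sub_sq (hab i)

lemma sum_sub_mul_sub_le_norm_sub_sq_div_four :
    ∑ i, (x i - a i) * (b i - x i) ≤ ‖b - a‖ ^ 2 / 4 := by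
  rw [EuclideanSpace.real_norm_sq_eq, Finset.sum_div]
  refine Finset.sum_le_sum fun i _ => ?_
  rw [PiLp.sub_apply]
  linarith [sq_nonneg (x i - a i - (b i - x i))]

theorem gradient_augmented_trilinear_error_bound_general [DecidableEq ι] {F : Type*}
    [NormedAddCommGroup F] [NormedSpace ℝ F] {f : EuclideanSpace ℝ ι → F}
    {f' : EuclideanSpace ℝ ι → EuclideanSpace ℝ ι →L[ℝ] F} {K : ℝ≥0} (hab : ∀ i, a i < b i)
    (hf : ∀ z ∈ coordBox a b, HasFDerivWithinAt f (f' z) (coordBox a b) z)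
    (hf' : LipschitzOnWith K f' (coordBox a b)) (hx : x ∈ coordBox a b) :
    ‖(∑ v, multilinearWeight a b v x •
        (f (boxVertex a b v) + f' (boxVertex a b v) (x - boxVertex a b v))) - f x‖ ≤
      K / 8 * ‖b - a‖ ^ 2 := by
  have hne : ∀ i, a i ≠ b i := fun i => (hab i).ne
  calc _ ≤ K / 2 * ∑ v, multilinearWeight a b v x * ‖x - boxVertex a b v‖ ^ 2 :=
        norm_sum_smul_add_fderiv_sub_le_of_lipschitzOnWith convex_coordBox hf hf'
          (fun v _ => multilinearWeight_nonneg hx v) (sum_multilinearWeight hne)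
          (fun v _ => boxVertex_mem_coordBox (fun i => (hab i).le) v) hx
    _ = K / 2 * ∑ i, (x i - a i) * (b i - x i) := by
        rw [sum_multilinearWeight_mul_norm_sub_sq hne]
    _ ≤ K / 2 * (‖b - a‖ ^ 2 / 4) := by
        gcongr
        exact sum_sub_mul_sub_le_norm_sub_sq_div_four
    _ = K / 8 * ‖b - a‖ ^ 2 := by ring

end Box

section Cube

variable (L : ℝ) (v : Fin 3 → Bool) (x : EuclideanSpace ℝ (Fin 3))

lemma cubeVertex_eq_boxVertex : cubeVertex L v = boxVertex 0 (WithLp.toLp 2 fun _ => L) v :=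
  rfl

lemma triWeight_eq_multilinearWeight :
    triWeight L v x = multilinearWeight 0 (WithLp.toLp 2 fun _ => L) v x := by
  simp [triWeight, multilinearWeight, lerpWeight]

end Cube

/-- Error bound for gradient-augmented trilinear interpolation on the cube
`Q = [0,L]³`: if `d` is twice continuously differentiable on an open set
containing `Q` with Hessian operator norm bounded by `M` on `Q`, then the
gradient-augmented interpolant
`d_ga(x) = Σ_v λ_v(x) * (d(x_v) + ⟨∇d(x_v), x - x_v⟩)` satisfies
`|d_ga(x) - d(x)| ≤ 3ML²/8` for all `x ∈ Q`. -/
theorem gradient_augmented_trilinear_error_bound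
    (L : ℝ) (hL : 0 < L)
    (Q : Set (EuclideanSpace ℝ (Fin 3)))
    (hQ : Q = {y : EuclideanSpace ℝ (Fin 3) | ∀ i, y i ∈ Set.Icc (0 : ℝ) L})
    (U : Set (EuclideanSpace ℝ (Fin 3))) (hU : IsOpen U) (hQU : Q ⊆ U)
    (d : EuclideanSpace ℝ (Fin 3) → ℝ)
    (hd : ContDiffOn ℝ 2 d U)
    (M : ℝ) (hM : 0 ≤ M)
    (hHess : ∀ z ∈ Q, ‖iteratedFDeriv ℝ 2 d z‖ ≤ M)
    (x : EuclideanSpace ℝ (Fin 3)) (hx : x ∈ Q) :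
    |(∑ v : Fin 3 → Bool, triWeight L v x *
        (d (cubeVertex L v) + ⟪gradient d (cubeVertex L v), x - cubeVertex L v⟫))
      - d x| ≤ 3 * M * L ^ 2 / 8 := by
  subst hQ
  let a : EuclideanSpace ℝ (Fin 3) := 0
  let b : EuclideanSpace ℝ (Fin 3) := WithLp.toLp 2 fun _ => L
  have hC2 : ∀ z ∈ coordBox a b, ContDiffAt ℝ 2 d z := fun z hz =>
    hd.contDiffAt (hU.mem_nhds (hQU hz))
  have hderiv : ∀ z ∈ coordBox a b, HasFDerivWithinAt d (fderiv ℝ d z) (coordBox a b) z :=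
    fun z hz => ((hC2 z hz).differentiableAt two_ne_zero).hasFDerivAt.hasFDerivWithinAt
  have hlip : LipschitzOnWith ⟨M, hM⟩ (fderiv ℝ d) (coordBox a b) :=
    lipschitzOnWith_fderiv_of_norm_iteratedFDeriv_two_le convex_coordBox
      (fun z hz => ((hC2 z hz).fderiv_right (m := 1) le_rfl).differentiableAt one_ne_zero) hHess
  have hdiag : ‖b - a‖ ^ 2 = 3 * L ^ 2 := by
    simp [a, b, EuclideanSpace.real_norm_sq_eq]
  calc _ ≤ M / 8 * ‖b - a‖ ^ 2 := by
        simp only [triWeight_eq_multilinearWeight, cubeVertex_eq_boxVertex, inner_gradient_left]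
        exact gradient_augmented_trilinear_error_bound_general (fun _ => hL) hderiv hlip hx
    _ = 3 * M * L ^ 2 / 8 := by rw [hdiag]; ring
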